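/- arXiv:1905.10119 — 5 statements merged into one kernel-verified Lean document; each statement's English description precedes it below -/
import Mathlib

section
/- Let C be a category with finite products and M a class of morphisms of C that contains all isomorphisms, is closed under composition, and is closed under binary products (if f, g ∈ M then f × g ∈ M). If X is an M-coextensive object of C, then every product projection p : X → A of X belongs to M, and moreover for every product projection p : X → A the unique morphism A → 1 to the terminal object belongs to M. -/
open CategoryTheory CategoryTheory.Limits

universe v u

variable {C : Type u} [Category.{v} C]

/-- `(p, q)` is a binary product diagram, exhibiting `X` as the product of `A` and `B`. -/
def IsBinaryProduct {X A B : C} (p : X ⟶ A) (q : X ⟶ B) : Prop :=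
  Nonempty (IsLimit (BinaryFan.mk p q))

/-- `p : X ⟶ A` is a product projection. -/
def IsProductProjection {X A : C} (p : X ⟶ A) : Prop :=
  ∃ (B : C) (q : X ⟶ B), IsBinaryProduct p q

/-- A pushout square whose two legs belong to the class `M`. -/
def IsMPushout (M : MorphismProperty C) {Z A B P : C}
    (f : Z ⟶ A) (g : Z ⟶ B) (a : A ⟶ P) (b : B ⟶ P) : Prop :=
  IsPushout f g a b ∧ M a ∧ M b

/-- `X` is an `M`-coextensive object. -/
structure MCoextensive (M : MorphismProperty C) (X : C) : Prop where
  pushout_exists : ∀ ⦃Y A : C⦄ (m : X ⟶ Y) (p : X ⟶ A), M m → IsProductProjection p →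
    ∃ (P : C) (a : A ⟶ P) (b : Y ⟶ P), IsMPushout M p m a b
  isBinaryProduct_iff : ∀ ⦃A₁ A₂ Y B₁ B₂ : C⦄ (π₁ : X ⟶ A₁) (π₂ : X ⟶ A₂)
    (f : X ⟶ Y) (p₁ : A₁ ⟶ B₁) (p₂ : A₂ ⟶ B₂) (π₁' : Y ⟶ B₁) (π₂' : Y ⟶ B₂),
    IsBinaryProduct π₁ π₂ → M f → M p₁ → M p₂ →
    π₁ ≫ p₁ = f ≫ π₁' → π₂ ≫ p₂ = f ≫ π₂' →
    (IsBinaryProduct π₁' π₂' ↔ (IsMPushout M π₁ f p₁ π₁' ∧ IsMPushout M π₂ f p₂ π₂'))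

/-- The class of product projections. -/
def projections (C : Type u) [Category.{v} C] : MorphismProperty C :=
  fun _ _ f => IsProductProjection f

/-- `X` is projection-coextensive. -/
def ProjectionCoextensive (X : C) : Prop := MCoextensive (projections C) X

/-- `f` is a regular epimorphism (a coequalizer of some parallel pair). -/
def IsRegularEpimorphism {X Y : C} (f : X ⟶ Y) : Prop :=
  ∃ (W : C) (a b : W ⟶ X) (h : a ≫ f = b ≫ f), Nonempty (IsColimit (Cofork.ofπ f h))

/-- The class of regular epimorphisms. -/
def regularEpis (C : Type u) [Category.{v} C] : MorphismProperty C :=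
  fun _ _ f => IsRegularEpimorphism f

/-- `X` is regularly-coextensive. -/
def RegularlyCoextensive (X : C) : Prop := MCoextensive (regularEpis C) X

/-- A regular category: finitely complete, coequalizers of kernel pairs, and
regular epimorphisms are stable under pullback. -/
class IsRegularCategory (C : Type u) [Category.{v} C] [HasFiniteLimits C] : Prop where
  hasCoequalizer_kernelPair : ∀ {X Y : C} (f : X ⟶ Y),
    HasCoequalizer (pullback.fst f f) (pullback.snd f f)
  regularEpi_stable : ∀ {X Y Z : C} (f : X ⟶ Y) (g : Z ⟶ Y),
    IsRegularEpimorphism f → IsRegularEpimorphism (pullback.snd f g)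

/-- `X` has global support: the unique morphism to the terminal object is a regular epi. -/
def HasGlobalSupport [HasTerminal C] (X : C) : Prop :=
  IsRegularEpimorphism (terminal.from X)

theorem IsBinaryProduct.id_isTerminalFrom {T : C} (hT : IsTerminal T) (A : C) :
    IsBinaryProduct (𝟙 A) (hT.from A) :=
  (BinaryFan.isLimit_iff_isIso_fst hT _).2 (inferInstanceAs (IsIso (𝟙 A)))

namespace MCoextensive

variable {M : MorphismProperty C} [M.ContainsIdentities] {X : C}

theorem mem_of_isProductProjection (hX : MCoextensive M X) {A : C} {p : X ⟶ A}
    (hp : IsProductProjection p) : M p := by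
  obtain ⟨B, q, hpq⟩ := hp
  have squares := (hX.isBinaryProduct_iff p q (𝟙 X) (𝟙 A) (𝟙 B) p q hpq
    (M.id_mem X) (M.id_mem A) (M.id_mem B) (by simp) (by simp)).1 hpq
  exact squares.1.2.2

theorem isTerminalFrom_mem (hX : MCoextensive M X) {T : C} (hT : IsTerminal T)
    {Y : C} {m : X ⟶ Y} (hm : M m) : M (hT.from Y) := by
  -- `m` is a map of product diagrams from `X ≅ X × T` to `Y ≅ Y × T`, with components `m`, `𝟙 T`.
  have squares := (hX.isBinaryProduct_iff (𝟙 X) (hT.from X) m m (𝟙 T) (𝟙 Y) (hT.from Y)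
    (.id_isTerminalFrom hT X) hm hm (M.id_mem T) (by simp) (hT.hom_ext _ _)).1
    (.id_isTerminalFrom hT Y)
  exact squares.2.2.2

end MCoextensive

theorem productProjection_mem_and_terminalFrom_mem_general [HasTerminal C]
    (M : MorphismProperty C) [M.ContainsIdentities] (X : C) (hX : MCoextensive M X) :
    (∀ ⦃A : C⦄ (p : X ⟶ A), IsProductProjection p → M p) ∧
    (∀ ⦃A : C⦄ (p : X ⟶ A), IsProductProjection p → M (terminal.from A)) :=
  ⟨fun _ _ hp => hX.mem_of_isProductProjection hp,
    fun _ _ hp => hX.isTerminalFrom_mem terminalIsTerminal (hX.mem_of_isProductProjection hp)⟩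

/-- Every product projection of an `M`-coextensive object is in `M`, and the terminal
morphism of any of its factors is in `M`. -/
theorem productProjection_mem_and_terminalFrom_mem
    {C : Type u} [Category.{v} C] [HasFiniteProducts C] (M : MorphismProperty C)
    (hiso : ∀ ⦃A B : C⦄ (f : A ⟶ B), IsIso f → M f)
    (hcomp : ∀ ⦃A B D : C⦄ (f : A ⟶ B) (g : B ⟶ D), M f → M g → M (f ≫ g))
    (hprod : ∀ ⦃A B A' B' : C⦄ (f : A ⟶ B) (g : A' ⟶ B'), M f → M g → M (prod.map f g))
    (X : C) (hX : MCoextensive M X) :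
    (∀ ⦃A : C⦄ (p : X ⟶ A), IsProductProjection p → M p) ∧
    (∀ ⦃A : C⦄ (p : X ⟶ A), IsProductProjection p → M (terminal.from A)) := by
  have : M.ContainsIdentities := ⟨fun A => hiso (𝟙 A) inferInstance⟩
  exact productProjection_mem_and_terminalFrom_mem_general M X hX
end

section
/- Let C be a category with finite products and M a class of morphisms of C that contains all isomorphisms, is closed under composition, and is closed under binary products. Let X be an M-coextensive object of C and p : X → A a product projection. Then for any morphism f : A → B, if the composite f∘p belongs to M, then f belongs to M. -/
open CategoryTheory CategoryTheory.Limits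

universe v u

variable {C : Type u} [Category.{v} C]

/-!
Push `p` out along `p ≫ f` to get legs `a : A ⟶ P` in `M` and `b : B ⟶ P`. By coextensivity `b` is
again a product projection, and `f` together with `𝟙 B` induces a retraction `u` of `b` with
`a ≫ u = f`. A product projection with a retraction is invertible, so `u` is an isomorphism and
`f = a ≫ u` lies in `M`.
-/

theorem IsBinaryProduct.symm {X A B : C} {p : X ⟶ A} {q : X ⟶ B} (h : IsBinaryProduct p q) :
    IsBinaryProduct q p :=
  h.map BinaryFan.isLimitFlip

theorem IsBinaryProduct.isSplitEpi_fst {X A B : C} {p : X ⟶ A} {q : X ⟶ B}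
    (h : IsBinaryProduct p q) (g : A ⟶ B) : IsSplitEpi p := by
  obtain ⟨hlim⟩ := h
  obtain ⟨s, hs, -⟩ := BinaryFan.IsLimit.lift' hlim (𝟙 A) g
  exact ⟨⟨⟨s, hs⟩⟩⟩

theorem IsProductProjection.isIso_of_isSplitMono {X A : C} {p : X ⟶ A}
    (hp : IsProductProjection p) [IsSplitMono p] : IsIso p := by
  obtain ⟨B, q, hpq⟩ := hp
  have : IsSplitEpi p := hpq.isSplitEpi_fst (retraction p ≫ q)
  exact isIso_of_mono_of_isSplitEpi p

theorem MCoextensive.isProductProjection_of_isMPushout {M : MorphismProperty C} {X A Y P : C}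
    (hX : MCoextensive M X) {p : X ⟶ A} {m : X ⟶ Y} {a : A ⟶ P} {b : Y ⟶ P}
    (hp : IsProductProjection p) (hm : M m) (h : IsMPushout M p m a b) :
    IsProductProjection b := by
  obtain ⟨B, q, hpq⟩ := hp
  obtain ⟨Q, c, d, hQ⟩ := hX.pushout_exists m q hm ⟨A, p, hpq.symm⟩
  exact ⟨Q, d, (hX.isBinaryProduct_iff p q m a c b d hpq hm h.2.1 hQ.2.1 h.1.w hQ.1.w).2 ⟨h, hQ⟩⟩

theorem mem_of_comp_productProjection_mem_general {M : MorphismProperty C}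
    [M.RespectsRight (MorphismProperty.isomorphisms C)] {X A B : C} (hX : MCoextensive M X)
    {p : X ⟶ A} (hp : IsProductProjection p) (f : A ⟶ B) (hfp : M (p ≫ f)) : M f := by
  obtain ⟨P, a, b, h⟩ := hX.pushout_exists (p ≫ f) p hfp hp
  obtain ⟨u, hau, hbu⟩ : ∃ u : P ⟶ B, a ≫ u = f ∧ b ≫ u = 𝟙 B :=
    h.1.exists_desc f (𝟙 B) (Category.comp_id _).symm
  have : IsSplitMono b := ⟨⟨⟨u, hbu⟩⟩⟩
  have : IsIso b := (hX.isProductProjection_of_isMPushout hp hfp h).isIso_of_isSplitMono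
  have hu : IsIso u := IsIso.of_isIso_fac_left hbu
  rw [← hau]
  exact MorphismProperty.RespectsRight.postcomp u hu a h.2.1

/-- If `p : X ⟶ A` is a product projection of an `M`-coextensive object `X` and
`p ≫ f ∈ M`, then `f ∈ M`. -/
theorem mem_of_comp_productProjection_mem
    {C : Type u} [Category.{v} C] [HasFiniteProducts C] (M : MorphismProperty C)
    (hiso : ∀ ⦃A B : C⦄ (f : A ⟶ B), IsIso f → M f)
    (hcomp : ∀ ⦃A B D : C⦄ (f : A ⟶ B) (g : B ⟶ D), M f → M g → M (f ≫ g))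
    (hprod : ∀ ⦃A B A' B' : C⦄ (f : A ⟶ B) (g : A' ⟶ B'), M f → M g → M (prod.map f g))
    (X : C) (hX : MCoextensive M X)
    {A B : C} (p : X ⟶ A) (hp : IsProductProjection p) (f : A ⟶ B)
    (hfp : M (p ≫ f)) : M f := by
  have : M.RespectsRight (MorphismProperty.isomorphisms C) :=
    ⟨fun g hg f hf => hcomp f g hf (hiso g hg)⟩
  exact mem_of_comp_productProjection_mem_general hX hp f hfp
end

section
/- Let C be a category with finite products and X a projection-coextensive object of C. Then X has the finite strict refinement property: for any finite index types I and J and any two product diagrams (f_i : X → A_i)_{i∈I} and (g_j : X → B_j)_{j∈J} (limit cones over the corresponding discrete diagrams), there exist objects C_{i,j} and morphisms α_{i,j} : A_i → C_{i,j} and β_{i,j} : B_j → C_{i,j} such that α_{i,j}∘f_i = β_{i,j}∘g_j for all i ∈ I and j ∈ J, for each i ∈ I the family (α_{i,j} : A_i → C_{i,j})_{j∈J} is a product diagram, and for each j ∈ J the family (β_{i,j} : B_j → C_{i,j})_{i∈I} is a product diagram. -/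
open CategoryTheory CategoryTheory.Limits

universe v u

variable {C : Type u} [Category.{v} C]

/-! The codomain of a product projection `r : X ⟶ E` of a coextensive object is again coextensive:
if `X ≅ E × K` and `E ≅ A₁ × A₂`, then `X ≅ A₁ × (A₂ × K)`, and since `A₂` is the pushout of
`X ⟶ A₂ × K` along `r`, squares out of `E` over `A₁` and `A₂` are pushouts exactly when the pasted
squares out of `X` over `A₁` and `A₂ × K` are.

Consequently the pushouts of a finite product diagram `X ⟶ B j` along a projection `X ⟶ Y` form a
product diagram on `Y`, by induction on the number of factors: write `X ≅ B₀ × E`, push out `E` to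
`Q`, so that `Y ≅ D₀ × Q`, and apply the induction hypothesis to `E ⟶ Q`. The strict refinement is
given by the pushouts of `f i` and `g j`. -/

section Pushouts

variable {X E A B P : C} {p : X ⟶ A} {q : X ⟶ B} {a : A ⟶ P} {b : B ⟶ P}

theorem epi_of_isPushout_id_id (h : IsPushout p p (𝟙 A) (𝟙 A)) : Epi p :=
  PushoutCocone.epi_of_isColimitMkIdId p h.isColimit

theorem isPushout_epi_comp_iff (r : E ⟶ X) [Epi r] :
    IsPushout (r ≫ p) (r ≫ q) a b ↔ IsPushout p q a b := by
  constructor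
  · intro h
    exact .of_isColimit
      (PushoutCocone.isColimitOfFactors _ _ r p q rfl rfl h.cocone h.isColimit)
  · intro h
    exact .of_isColimit (PushoutCocone.isColimitOfEpiComp p q r h.cocone h.isColimit)

end Pushouts

namespace IsBinaryProduct

variable {X Y A B K : C} {p : X ⟶ A} {q : X ⟶ B}

theorem swap (h : IsBinaryProduct p q) : IsBinaryProduct q p :=
  h.map BinaryFan.isLimitFlip

theorem fst_isProductProjection (h : IsBinaryProduct p q) : IsProductProjection p :=
  ⟨B, q, h⟩

theorem snd_isProductProjection (h : IsBinaryProduct p q) : IsProductProjection q :=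
  h.swap.fst_isProductProjection

theorem of_isIso_of_isTerminal {T : C} (hT : IsTerminal T) (e : X ⟶ Y) [he : IsIso e]
    (t : X ⟶ T) : IsBinaryProduct e t :=
  (BinaryFan.isLimit_iff_isIso_fst hT (BinaryFan.mk e t)).2 he

theorem comp_isIso_fst (h : IsBinaryProduct p q) (e : A ⟶ Y) [IsIso e] :
    IsBinaryProduct (p ≫ e) q :=
  h.map (BinaryFan.isLimitCompLeftIso _ e)

theorem assoc [HasBinaryProducts C] {r : X ⟶ Y} {k : X ⟶ K} (h : IsBinaryProduct r k)
    {s : Y ⟶ A} {t : Y ⟶ B} (h' : IsBinaryProduct s t) :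
    IsBinaryProduct (r ≫ s) (prod.lift (r ≫ t) k) := by
  obtain ⟨hX⟩ := h
  obtain ⟨hY⟩ := h'
  have hlift : (prodIsProd B K).lift (BinaryFan.mk (r ≫ t) k) = prod.lift (r ≫ t) k :=
    BinaryFan.IsLimit.hom_ext (prodIsProd B K)
      (((prodIsProd B K).fac _ ⟨.left⟩).trans (prod.lift_fst _ _).symm)
      (((prodIsProd B K).fac _ ⟨.right⟩).trans (prod.lift_snd _ _).symm)
  rw [← hlift]
  exact ⟨IsLimit.assoc hY (prodIsProd B K) hX⟩

end IsBinaryProduct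

namespace IsProductProjection

variable {X Y Z : C} {p : X ⟶ Y}

theorem of_isIso [HasTerminal C] (e : X ⟶ Y) [IsIso e] : IsProductProjection e :=
  (IsBinaryProduct.of_isIso_of_isTerminal terminalIsTerminal e
    (terminal.from X)).fst_isProductProjection

theorem of_isTerminal {T : C} (hT : IsTerminal T) (t : X ⟶ T) : IsProductProjection t :=
  (IsBinaryProduct.of_isIso_of_isTerminal hT (𝟙 X) t).snd_isProductProjection

theorem comp [HasBinaryProducts C] (hp : IsProductProjection p) {q : Y ⟶ Z}
    (hq : IsProductProjection q) : IsProductProjection (p ≫ q) := by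
  obtain ⟨K, k, hk⟩ := hp
  obtain ⟨L, l, hl⟩ := hq
  exact (hk.assoc hl).fst_isProductProjection

theorem isTerminal (hp : IsProductProjection p) (hX : IsTerminal X) :
    Nonempty (IsTerminal Y) := by
  obtain ⟨B, q, ⟨h⟩⟩ := hp
  obtain ⟨l, hl, -⟩ := BinaryFan.IsLimit.lift' h (𝟙 Y) (hX.from Y ≫ q)
  exact ⟨hX.ofIso ⟨p, l, hX.hom_ext _ _, hl⟩⟩

end IsProductProjection

section Fans

theorem nonempty_isLimit_fan_equiv_iff {J K : Type*} (e : J ≃ K) {X : C} {B : K → C}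
    (g : ∀ k, X ⟶ B k) :
    Nonempty (IsLimit (Fan.mk X fun j => g (e j))) ↔ Nonempty (IsLimit (Fan.mk X g)) :=
  (Fan.isLimitEquivOfEquiv e (Fan.mk X g)).nonempty_congr.symm

section Option

variable {J : Type*} {X E : C} {B : Option J → C} {g : ∀ j, X ⟶ B j}
  {π : ∀ j, E ⟶ B (some j)} {s : X ⟶ E}

theorem isBinaryProduct_of_isLimit_fan_option (hE : IsLimit (Fan.mk E π))
    (hs : ∀ j, s ≫ π j = g (some j)) (hX : IsLimit (Fan.mk X g)) :
    IsBinaryProduct (g none) s := by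
  let legs {T : C} (x : T ⟶ B none) (y : T ⟶ E) : ∀ j, T ⟶ B j
    | none => x
    | some j => y ≫ π j
  have fac {T : C} (x : T ⟶ B none) (y : T ⟶ E) (j) :
      Fan.IsLimit.lift hX (legs x y) ≫ g j = legs x y j := Fan.IsLimit.fac hX _ j
  refine ⟨BinaryFan.IsLimit.mk _ (fun x y => Fan.IsLimit.lift hX (legs x y))
    (fun x y => fac x y none) (fun x y => Fan.IsLimit.hom_ext hE _ _ fun j => ?_)
    (fun x y m hx hy => Fan.IsLimit.hom_ext hX _ _ ?_)⟩
  · simpa [hs] using fac x y (some j)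
  · rintro (_ | j)
    · exact hx.trans (fac x y none).symm
    · simpa [hs, fac] using congr($hy ≫ π j)

theorem nonempty_isLimit_fan_option_of_isBinaryProduct (hE : IsLimit (Fan.mk E π))
    (hs : ∀ j, s ≫ π j = g (some j)) (h : IsBinaryProduct (g none) s) :
    Nonempty (IsLimit (Fan.mk X g)) := by
  obtain ⟨hX⟩ := h
  let lift (c : Fan B) : c.pt ⟶ X :=
    BinaryFan.IsLimit.lift hX (c.proj none) (Fan.IsLimit.lift hE fun j => c.proj (some j))
  have lift_none (c : Fan B) : lift c ≫ g none = c.proj none :=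
    BinaryFan.IsLimit.lift_fst hX _ _
  have lift_s (c : Fan B) : lift c ≫ s = Fan.IsLimit.lift hE fun j => c.proj (some j) :=
    BinaryFan.IsLimit.lift_snd hX _ _
  have lift_some (c : Fan B) (j : J) : lift c ≫ g (some j) = c.proj (some j) := by
    rw [← hs, ← Category.assoc, lift_s]
    exact Fan.IsLimit.fac hE _ j
  refine ⟨Fan.IsLimit.mk _ lift (fun c => Option.rec (lift_none c) (lift_some c))
    fun c m hm => BinaryFan.IsLimit.hom_ext hX ((hm none).trans (lift_none c).symm)
      (Fan.IsLimit.hom_ext hE _ _ fun j => ?_)⟩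
  simpa [hs, lift_some] using hm (some j)

end Option

theorem nonempty_isLimit_fan_iff_isTerminal {J : Type*} [IsEmpty J] {X : C} {B : J → C}
    (g : ∀ j, X ⟶ B j) : Nonempty (IsLimit (Fan.mk X g)) ↔ Nonempty (IsTerminal X) := by
  constructor
  · rintro ⟨hX⟩
    exact ⟨.ofUniqueHom (fun _ => Fan.IsLimit.lift hX isEmptyElim)
      fun _ _ => Fan.IsLimit.hom_ext hX _ _ isEmptyElim⟩
  · rintro ⟨hX⟩
    exact ⟨Fan.IsLimit.mk _ (fun _ => hX.from _) (fun _ => isEmptyElim)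
      fun _ _ _ => hX.hom_ext _ _⟩

theorem isProductProjection_of_isLimit_fan [HasFiniteProducts C] {J : Type*} [Finite J] {X : C}
    {B : J → C} {g : ∀ j, X ⟶ B j} (hg : IsLimit (Fan.mk X g)) (j : J) :
    IsProductProjection (g j) := by
  classical
  let e := Equiv.optionSubtypeNe j
  have hge : Nonempty (IsLimit (Fan.mk X fun k => g (e k))) :=
    (nonempty_isLimit_fan_equiv_iff e g).2 ⟨hg⟩
  exact (isBinaryProduct_of_isLimit_fan_option (productIsProduct fun k => B (e (some k)))
    (Pi.lift_π fun k => g (e (some k))) hge.some).fst_isProductProjection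

end Fans

namespace MCoextensive

variable {M : MorphismProperty C} {X Y E : C}

theorem isProductProjection_inr (hX : MCoextensive M X) (hM : projections C ≤ M)
    {A P : C} {p : X ⟶ A} {f : X ⟶ Y} {a : A ⟶ P} {b : Y ⟶ P} (hp : IsProductProjection p)
    (hf : IsProductProjection f) (h : IsPushout p f a b) : IsProductProjection b := by
  obtain ⟨B, q, hpq⟩ := hp
  obtain ⟨P₁, a₁, b₁, h₁⟩ := hX.pushout_exists f p (hM f hf) hpq.fst_isProductProjection
  obtain ⟨P₂, a₂, b₂, h₂⟩ := hX.pushout_exists f q (hM f hf) hpq.snd_isProductProjection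
  have hb : IsBinaryProduct b₁ b₂ :=
    (hX.isBinaryProduct_iff p q f a₁ a₂ b₁ b₂ hpq (hM f hf) h₁.2.1 h₂.2.1 h₁.1.w h₂.1.w).2
      ⟨h₁, h₂⟩
  rw [← h₁.1.inr_isoIsPushout_hom _ _ h]
  exact (hb.comp_isIso_fst _).fst_isProductProjection

theorem isBinaryProduct_iff_isPushout (hX : MCoextensive M X) (hM : projections C ≤ M)
    {A₁ A₂ B₁ B₂ : C} {π₁ : X ⟶ A₁} {π₂ : X ⟶ A₂} {f : X ⟶ Y} {p₁ : A₁ ⟶ B₁} {p₂ : A₂ ⟶ B₂}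
    {π₁' : Y ⟶ B₁} {π₂' : Y ⟶ B₂} (hπ : IsBinaryProduct π₁ π₂) (hf : IsProductProjection f)
    (hp₁ : IsProductProjection p₁) (hp₂ : IsProductProjection p₂)
    (w₁ : π₁ ≫ p₁ = f ≫ π₁') (w₂ : π₂ ≫ p₂ = f ≫ π₂') :
    IsBinaryProduct π₁' π₂' ↔ IsPushout π₁ f p₁ π₁' ∧ IsPushout π₂ f p₂ π₂' := by
  rw [hX.isBinaryProduct_iff π₁ π₂ f p₁ p₂ π₁' π₂' hπ (hM f hf) (hM p₁ hp₁) (hM p₂ hp₂) w₁ w₂]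
  refine ⟨fun h => ⟨h.1.1, h.2.1⟩, fun ⟨h₁, h₂⟩ => ?_⟩
  have hπ₁' := hX.isProductProjection_inr hM hπ.fst_isProductProjection hf h₁
  have hπ₂' := hX.isProductProjection_inr hM hπ.snd_isProductProjection hf h₂
  exact ⟨⟨h₁, hM p₁ hp₁, hM π₁' hπ₁'⟩, h₂, hM p₂ hp₂, hM π₂' hπ₂'⟩

theorem isBinaryProduct_of_isPushout (hX : MCoextensive M X) (hM : projections C ≤ M)
    {A₁ A₂ B₁ B₂ : C} {π₁ : X ⟶ A₁} {π₂ : X ⟶ A₂} {f : X ⟶ Y} {p₁ : A₁ ⟶ B₁} {p₂ : A₂ ⟶ B₂}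
    {π₁' : Y ⟶ B₁} {π₂' : Y ⟶ B₂} (hπ : IsBinaryProduct π₁ π₂) (hf : IsProductProjection f)
    (h₁ : IsPushout π₁ f p₁ π₁') (h₂ : IsPushout π₂ f p₂ π₂') : IsBinaryProduct π₁' π₂' :=
  (hX.isBinaryProduct_iff_isPushout hM hπ hf
    (hX.isProductProjection_inr hM hf hπ.fst_isProductProjection h₁.flip)
    (hX.isProductProjection_inr hM hf hπ.snd_isProductProjection h₂.flip) h₁.w h₂.w).2 ⟨h₁, h₂⟩

theorem epi_of_isProductProjection [HasTerminal C] (hX : MCoextensive M X) (hM : projections C ≤ M)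
    {r : X ⟶ E} (hr : IsProductProjection r) : Epi r := by
  obtain ⟨K, k, hrk⟩ := hr
  have hE : IsBinaryProduct (𝟙 E) (terminal.from E) :=
    .of_isIso_of_isTerminal terminalIsTerminal _ _
  have hpush := (hX.isBinaryProduct_iff_isPushout hM hrk hrk.fst_isProductProjection
    (.of_isIso (𝟙 E)) (.of_isTerminal terminalIsTerminal (terminal.from K)) rfl
    (Subsingleton.elim _ _)).1 hE
  exact epi_of_isPushout_id_id hpush.1

variable [HasFiniteProducts C]

theorem isPushout_prod_lift_fst (hX : MCoextensive M X) (hM : projections C ≤ M) {K A : C}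
    {r : X ⟶ E} {k : X ⟶ K} (hrk : IsBinaryProduct r k) {s : E ⟶ A}
    (hs : IsProductProjection s) : IsPushout (prod.lift (r ≫ s) k) r prod.fst s := by
  obtain ⟨B, t, hst⟩ := hs
  have hlift : IsProductProjection (prod.lift (r ≫ s) k) :=
    (hrk.assoc hst.swap).snd_isProductProjection
  exact ((hX.isBinaryProduct_iff_isPushout hM hrk hlift hst.fst_isProductProjection
    (.of_isIso (𝟙 K)) (prod.lift_fst _ _).symm
    (by rw [prod.lift_snd, Category.comp_id])).1 ⟨prodIsProd A K⟩).1.flip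

theorem isBinaryProduct_iff_isPushout_of_isProductProjection (hX : MCoextensive M X)
    (hM : projections C ≤ M) {r : X ⟶ E} (hr : IsProductProjection r)
    {A₁ A₂ B₁ B₂ : C} {π₁ : E ⟶ A₁} {π₂ : E ⟶ A₂} {f : E ⟶ Y} {p₁ : A₁ ⟶ B₁} {p₂ : A₂ ⟶ B₂}
    {π₁' : Y ⟶ B₁} {π₂' : Y ⟶ B₂} (hπ : IsBinaryProduct π₁ π₂) (hf : IsProductProjection f)
    (hp₁ : IsProductProjection p₁) (hp₂ : IsProductProjection p₂)
    (w₁ : π₁ ≫ p₁ = f ≫ π₁') (w₂ : π₂ ≫ p₂ = f ≫ π₂') :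
    IsBinaryProduct π₁' π₂' ↔ IsPushout π₁ f p₁ π₁' ∧ IsPushout π₂ f p₂ π₂' := by
  have : Epi r := hX.epi_of_isProductProjection hM hr
  obtain ⟨K, k, hrk⟩ := hr
  let c : X ⟶ A₂ ⨯ K := prod.lift (r ≫ π₂) k
  have hc : IsPushout c r prod.fst π₂ :=
    hX.isPushout_prod_lift_fst hM hrk hπ.snd_isProductProjection
  have hfst : IsProductProjection (prod.fst : A₂ ⨯ K ⟶ A₂) := ⟨K, prod.snd, ⟨prodIsProd A₂ K⟩⟩
  calc
    IsBinaryProduct π₁' π₂'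
      ↔ IsPushout (r ≫ π₁) (r ≫ f) p₁ π₁' ∧ IsPushout c (r ≫ f) (prod.fst ≫ p₂) π₂' :=
        hX.isBinaryProduct_iff_isPushout hM (hrk.assoc hπ) (.comp ⟨K, k, hrk⟩ hf) hp₁
          (hfst.comp hp₂) (by simp [w₁]) (by rw [hc.w_assoc, w₂, Category.assoc])
    _ ↔ IsPushout π₁ f p₁ π₁' ∧ IsPushout π₂ f p₂ π₂' :=
        and_congr (isPushout_epi_comp_iff r) (hc.paste_vert_iff w₂)

theorem projectionCoextensive_of_isProductProjection (hX : MCoextensive M X)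
    (hM : projections C ≤ M) {r : X ⟶ E} (hr : IsProductProjection r) :
    ProjectionCoextensive E where
  pushout_exists Y A f p hf hp := by
    have : Epi r := hX.epi_of_isProductProjection hM hr
    have hrp := hr.comp hp
    have hrf := hr.comp hf
    obtain ⟨P, a, b, h, -, -⟩ := hX.pushout_exists (r ≫ f) (r ≫ p) (hM _ hrf) hrp
    exact ⟨P, a, b, (isPushout_epi_comp_iff r).1 h,
      hX.isProductProjection_inr hM hrf hrp h.flip, hX.isProductProjection_inr hM hrp hrf h⟩
  isBinaryProduct_iff A₁ A₂ Y B₁ B₂ π₁ π₂ f p₁ p₂ π₁' π₂' hπ hf hp₁ hp₂ w₁ w₂ := by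
    have hpush :=
      hX.isBinaryProduct_iff_isPushout_of_isProductProjection hM hr hπ hf hp₁ hp₂ w₁ w₂
    refine ⟨fun h => ?_, fun h => hpush.2 ⟨h.1.1, h.2.1⟩⟩
    exact ⟨⟨(hpush.1 h).1, hp₁, h.fst_isProductProjection⟩, (hpush.1 h).2, hp₂,
      h.snd_isProductProjection⟩

theorem projectionCoextensive (hX : MCoextensive M X) (hM : projections C ≤ M) :
    ProjectionCoextensive X :=
  hX.projectionCoextensive_of_isProductProjection hM (.of_isIso (𝟙 X))

end MCoextensive

namespace ProjectionCoextensive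

theorem nonempty_isLimit_fan_of_isPushout [HasFiniteProducts C] {J : Type*} [Finite J] {X Y : C}
    (hX : ProjectionCoextensive X) {B D : J → C} {g : ∀ j, X ⟶ B j}
    (hg : Nonempty (IsLimit (Fan.mk X g))) {f : X ⟶ Y} (hf : IsProductProjection f)
    {b : ∀ j, B j ⟶ D j} {d : ∀ j, Y ⟶ D j} (h : ∀ j, IsPushout (g j) f (b j) (d j)) :
    Nonempty (IsLimit (Fan.mk Y d)) := by
  induction J using Finite.induction_empty_option generalizing X Y with
  | of_equiv e ih =>
    rw [← nonempty_isLimit_fan_equiv_iff e] at hg ⊢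
    exact ih hX hg hf fun j => h (e j)
  | h_empty =>
    rw [nonempty_isLimit_fan_iff_isTerminal] at hg ⊢
    exact hf.isTerminal hg.some
  | h_option ih =>
    let s : X ⟶ ∏ᶜ fun j => B (some j) := Pi.lift fun j => g (some j)
    let π (j) : (∏ᶜ fun j => B (some j)) ⟶ B (some j) := Pi.π _ j
    have hsπ (j) : s ≫ π j = g (some j) := Pi.lift_π _ j
    have hE : IsLimit (Fan.mk _ π) := productIsProduct _
    have hgs : IsBinaryProduct (g none) s :=
      isBinaryProduct_of_isLimit_fan_option hE hsπ hg.some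
    have hs : IsProductProjection s := hgs.snd_isProductProjection
    obtain ⟨Q, a, q, hQ, ha, -⟩ := hX.pushout_exists f s hf hs
    have hq : IsBinaryProduct (d none) q :=
      hX.isBinaryProduct_of_isPushout le_rfl hgs hf (h none) hQ
    have hw (j) : s ≫ π j ≫ b (some j) = f ≫ d (some j) := by
      rw [← (h (some j)).w, ← hsπ, Category.assoc]
    let m (j) : Q ⟶ D (some j) := hQ.desc (π j ≫ b (some j)) (d (some j)) (hw j)
    have hqm (j) : q ≫ m j = d (some j) := hQ.inr_desc _ _ _
    have hm (j) : IsPushout (π j) a (b (some j)) (m j) := by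
      refine .of_left ?_ (hQ.inl_desc _ _ _).symm hQ
      rw [hsπ, hqm]
      exact h (some j)
    have hQm : Nonempty (IsLimit (Fan.mk Q m)) :=
      ih (hX.projectionCoextensive_of_isProductProjection le_rfl hs) ⟨hE⟩ ha hm
    exact nonempty_isLimit_fan_option_of_isBinaryProduct hQm.some hqm hq

end ProjectionCoextensive

theorem projectionCoextensive_finite_strict_refinement_general
    {C : Type u} [Category.{v} C] [HasFiniteProducts C] {M : MorphismProperty C}
    (hM : projections C ≤ M) (X : C) (hX : MCoextensive M X)
    (I J : Type*) [Finite I] [Finite J]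
    (A : I → C) (B : J → C) (f : ∀ i, X ⟶ A i) (g : ∀ j, X ⟶ B j)
    (hf : Nonempty (IsLimit (Fan.mk X f))) (hg : Nonempty (IsLimit (Fan.mk X g))) :
    ∃ (D : I → J → C) (α : ∀ i j, A i ⟶ D i j) (β : ∀ i j, B j ⟶ D i j),
      (∀ i j, f i ≫ α i j = g j ≫ β i j) ∧
      (∀ i, Nonempty (IsLimit (Fan.mk (A i) (fun j => α i j)))) ∧
      (∀ j, Nonempty (IsLimit (Fan.mk (B j) (fun i => β i j)))) := by
  have hf_proj (i : I) := isProductProjection_of_isLimit_fan hf.some i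
  have hg_proj (j : J) := isProductProjection_of_isLimit_fan hg.some j
  have hX' : ProjectionCoextensive X := hX.projectionCoextensive hM
  choose D α β h using fun i j => hX'.pushout_exists (g j) (f i) (hg_proj j) (hf_proj i)
  refine ⟨D, α, β, fun i j => (h i j).1.w, fun i => ?_, fun j => ?_⟩
  · exact hX'.nonempty_isLimit_fan_of_isPushout hg (hf_proj i) fun j => (h i j).1.flip
  · exact hX'.nonempty_isLimit_fan_of_isPushout hf (hg_proj j) fun i => (h i j).1

/-- A projection-coextensive object has the finite strict refinement property. -/
theorem projectionCoextensive_finite_strict_refinement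
    {C : Type u} [Category.{v} C] [HasFiniteProducts C]
    (X : C) (hX : ProjectionCoextensive X)
    (I J : Type) [Finite I] [Finite J]
    (A : I → C) (B : J → C) (f : ∀ i, X ⟶ A i) (g : ∀ j, X ⟶ B j)
    (hf : Nonempty (IsLimit (Fan.mk X f))) (hg : Nonempty (IsLimit (Fan.mk X g))) :
    ∃ (D : I → J → C) (α : ∀ i j, A i ⟶ D i j) (β : ∀ i j, B j ⟶ D i j),
      (∀ i j, f i ≫ α i j = g j ≫ β i j) ∧
      (∀ i, Nonempty (IsLimit (Fan.mk (A i) (fun j => α i j)))) ∧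
      (∀ j, Nonempty (IsLimit (Fan.mk (B j) (fun i => β i j)))) :=
  projectionCoextensive_finite_strict_refinement_general le_rfl X hX I J A B f g hf hg
end

section
/- Let C be a category with finite products and X a projection-coextensive object of C. If (a : X → A, b : X → B) is a binary product diagram and a is an isomorphism, then B is a terminal object. -/
open CategoryTheory CategoryTheory.Limits

universe v u

variable {C : Type u} [Category.{v} C]

/-! If `(a, b)` and `(a, b ≫ p)` are both binary product diagrams on an `M`-coextensive object `X`,
then `p` is a pushout of the identity of `X` along `b`, hence an isomorphism. When `a` is an
isomorphism, both `(a, b)` and `(a, X ⟶ ⊤_ C)` are product diagrams, so this applies to the morphism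
`p : B ⟶ ⊤_ C`. -/

theorem MCoextensive.isIso_of_isBinaryProduct_comp {M : MorphismProperty C}
    [M.ContainsIdentities] {X A B B' : C} (hX : MCoextensive M X) {a : X ⟶ A} {b : X ⟶ B}
    {p : B ⟶ B'} (hp : M p) (hab : IsBinaryProduct a b) (habp : IsBinaryProduct a (b ≫ p)) :
    IsIso p := by
  have hpush : IsPushout b (𝟙 X) p (b ≫ p) :=
    ((hX.isBinaryProduct_iff a b (𝟙 X) (𝟙 A) p a (b ≫ p) hab (M.id_mem X) (M.id_mem A) hp
      (by simp) (by simp)).mp habp).2.1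
  exact hpush.isIso_inl_of_isIso

section HasTerminal

variable [HasTerminal C]

theorem isBinaryProduct_terminal_from_right {X A : C} (f : X ⟶ A) [IsIso f] :
    IsBinaryProduct f (terminal.from X) :=
  (BinaryFan.isLimit_iff_isIso_fst terminalIsTerminal _).mpr ‹IsIso f›

theorem isBinaryProduct_terminal_from_left {X A : C} (f : X ⟶ A) [IsIso f] :
    IsBinaryProduct (terminal.from X) f :=
  (BinaryFan.isLimit_iff_isIso_snd terminalIsTerminal _).mpr ‹IsIso f›

theorem isProductProjection_terminal_from (X : C) : IsProductProjection (terminal.from X) :=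
  ⟨X, 𝟙 X, isBinaryProduct_terminal_from_left (𝟙 X)⟩

instance projections_containsIdentities : (projections C).ContainsIdentities where
  id_mem X := ⟨⊤_ C, terminal.from X, isBinaryProduct_terminal_from_right (𝟙 X)⟩

theorem projectionCoextensive_isTerminal_of_isIso_general {M : MorphismProperty C}
    [M.ContainsIdentities] {X A B : C} (hX : MCoextensive M X) {a : X ⟶ A} {b : X ⟶ B}
    (hab : IsBinaryProduct a b) [IsIso a] (hB : M (terminal.from B)) :
    Nonempty (IsTerminal B) := by
  have hcomp : IsBinaryProduct a (b ≫ terminal.from B) := by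
    simpa only [terminal.comp_from] using isBinaryProduct_terminal_from_right a
  have : IsIso (terminal.from B) := hX.isIso_of_isBinaryProduct_comp hB hab hcomp
  exact ⟨terminalIsTerminal.ofIso (asIso (terminal.from B)).symm⟩

end HasTerminal

/-- If `(a, b)` is a binary product diagram on a projection-coextensive object and
`a` is an isomorphism, then `B` is terminal. -/
theorem projectionCoextensive_isTerminal_of_isIso
    {C : Type u} [Category.{v} C] [HasFiniteProducts C]
    (X : C) (hX : ProjectionCoextensive X)
    {A B : C} (a : X ⟶ A) (b : X ⟶ B) (hab : IsBinaryProduct a b) (ha : IsIso a) :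
    Nonempty (IsTerminal B) :=
  projectionCoextensive_isTerminal_of_isIso_general hX hab (isProductProjection_terminal_from B)
end

section
/- Let C be a category with finite products in which product projections are stable under pushout (for every product projection p : X → A and every morphism f : X → Y, a pushout of p along f exists and the pushout leg with domain Y is a product projection). Then C is co-Boolean if and only if every object of C is projection-coextensive. -/
open CategoryTheory CategoryTheory.Limits

universe v u

variable {C : Type u} [Category.{v} C]

/-- A co-Boolean category: pushouts of product projections along arbitrary morphisms
exist and are product projections, product projections push out binary product
diagrams to binary product diagrams, and the only objects whose diagonal pair of
identities is a binary product diagram are the terminal ones. -/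
structure CoBoolean (C : Type u) [Category.{v} C] [HasFiniteProducts C] : Prop where
  pushout_exists : ∀ ⦃X A Y : C⦄ (p : X ⟶ A) (f : X ⟶ Y), IsProductProjection p →
    ∃ (P : C) (a : A ⟶ P) (q : Y ⟶ P), IsPushout p f a q ∧ IsProductProjection q
  pushout_prod : ∀ ⦃X A₁ A₂ Y B₁ B₂ : C⦄ (π₁ : X ⟶ A₁) (π₂ : X ⟶ A₂) (f : X ⟶ Y)
    (p₁ : A₁ ⟶ B₁) (p₂ : A₂ ⟶ B₂) (π₁' : Y ⟶ B₁) (π₂' : Y ⟶ B₂),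
    IsBinaryProduct π₁ π₂ → IsProductProjection f →
    IsPushout π₁ f p₁ π₁' → IsPushout π₂ f p₂ π₂' → IsBinaryProduct π₁' π₂'
  terminal_of_diag : ∀ (X : C), IsBinaryProduct (𝟙 X) (𝟙 X) → Nonempty (IsTerminal X)

/-!
In a co-Boolean category, push a product `X = A × B` out along its projection `p : X ⟶ A`. The
result is the product of the cokernel pair of `p` with the pushout `Q` of `A` and `B` under `X`.
Since the coprojections of a cokernel pair are split monomorphisms, `(𝟙 A, A ⟶ Q)` is again a
product. The same trick applied to `A ⟶ Q` makes `(𝟙 Q, 𝟙 Q)` a product, so `Q` is terminal. The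
cokernel pair of `p` is therefore trivial and `p` is an epimorphism.

Now let `f : X ⟶ Y` be a projection compatible with products `A₁ × A₂` on `X` and `B₁ × B₂` on `Y`.
Pushing out along `f` gives a second decomposition `Y = P₁ × P₂` with comparisons `cᵢ : Pᵢ ⟶ Bᵢ`,
and pushing `Y = B₁ × B₂` out along `Y ⟶ P₁` gives `P₁ = B₁ × R` with first projection `c₁`. The
pushout of `P₂` and `P₁` under `Y` is terminal and maps epimorphically to `R`, so `R` is terminal
and `c₁` is an isomorphism.

Conversely, if `(𝟙 X, 𝟙 X)` is a product, comparing it with the product `(𝟙 X, X ⟶ ⊤_ C)` shows that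
`X ⟶ ⊤_ C` is a pushout of `𝟙 X`, hence an isomorphism.
-/

theorem IsBinaryProduct.fst {X A B : C} {p : X ⟶ A} {q : X ⟶ B}
    (h : IsBinaryProduct p q) : IsProductProjection p :=
  ⟨B, q, h⟩

theorem IsBinaryProduct.snd {X A B : C} {p : X ⟶ A} {q : X ⟶ B}
    (h : IsBinaryProduct p q) : IsProductProjection q :=
  h.symm.fst

theorem isBinaryProduct_iff_isIso_fst {X A T : C} (hT : IsTerminal T) {p : X ⟶ A} {t : X ⟶ T} :
    IsBinaryProduct p t ↔ IsIso p :=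
  BinaryFan.isLimit_iff_isIso_fst hT (BinaryFan.mk p t)

theorem isBinaryProduct_iff_existsUnique {X A B : C} {p : X ⟶ A} {q : X ⟶ B} :
    IsBinaryProduct p q ↔
      ∀ ⦃T : C⦄ (a : T ⟶ A) (b : T ⟶ B), ∃! l : T ⟶ X, l ≫ p = a ∧ l ≫ q = b := by
  constructor
  · rintro ⟨hlim⟩ T a b
    obtain ⟨l, hp, hq⟩ := BinaryFan.IsLimit.lift' hlim a b
    exact ⟨l, ⟨hp, hq⟩, fun m hm ↦
      BinaryFan.IsLimit.hom_ext hlim (hm.1.trans hp.symm) (hm.2.trans hq.symm)⟩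
  · intro h
    choose lift hlift huniq using h
    exact ⟨BinaryFan.isLimitMk (fun s ↦ lift s.fst s.snd) (fun _ ↦ (hlift _ _).1)
      (fun _ ↦ (hlift _ _).2) (fun _ m hp hq ↦ huniq _ _ m ⟨hp, hq⟩)⟩

theorem IsBinaryProduct.of_comp_mono_left {X A A' B : C} {p : X ⟶ A} {m : A ⟶ A'} [Mono m]
    {q : X ⟶ B} (h : IsBinaryProduct (p ≫ m) q) : IsBinaryProduct p q := by
  rw [isBinaryProduct_iff_existsUnique] at h ⊢
  intro T a b
  simpa only [← Category.assoc, cancel_mono] using h (a ≫ m) b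

theorem IsBinaryProduct.of_comp_mono_right {X A B B' : C} {p : X ⟶ A} {q : X ⟶ B} {m : B ⟶ B'}
    [Mono m] (h : IsBinaryProduct p (q ≫ m)) : IsBinaryProduct p q :=
  h.symm.of_comp_mono_left.symm

theorem IsProductProjection.comp_isIso {X A B : C} {p : X ⟶ A} (h : IsProductProjection p)
    (i : A ⟶ B) [IsIso i] : IsProductProjection (p ≫ i) := by
  obtain ⟨D, q, ⟨hlim⟩⟩ := h
  exact ⟨D, q, ⟨BinaryFan.isLimitCompLeftIso _ i hlim⟩⟩

theorem isStableUnderCobaseChange_projections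
    (hstable : ∀ ⦃X A Y : C⦄ (p : X ⟶ A) (f : X ⟶ Y), IsProductProjection p →
      ∃ (P : C) (a : A ⟶ P) (q : Y ⟶ P), IsPushout p f a q ∧ IsProductProjection q) :
    (projections C).IsStableUnderCobaseChange where
  of_isPushout {_ _ _ _ p f q _} sq hp := by
    obtain ⟨P, a, q', sq', hq'⟩ := hstable p f hp
    have hq : q' ≫ (sq'.isoIsPushout _ _ sq.flip).hom = q := sq'.inr_isoIsPushout_hom _ _ sq.flip
    exact hq ▸ hq'.comp_isIso _

theorem mono_inr_of_isPushout_self {X Y P : C} {f : X ⟶ Y} {a b : Y ⟶ P}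
    (h : IsPushout f f a b) : Mono b :=
  mono_of_mono_fac (h.inr_desc (𝟙 Y) (𝟙 Y) rfl)

namespace CoBoolean

variable [HasFiniteProducts C] (H : CoBoolean C)

include H

theorem nonempty_isTerminal_of_isBinaryProduct_id {A Q : C} {c : A ⟶ Q}
    (h : IsBinaryProduct (𝟙 A) c) : Nonempty (IsTerminal Q) := by
  obtain ⟨S, s, s', hS, -⟩ := H.pushout_exists c c h.snd
  have hprod : IsBinaryProduct (𝟙 Q) s' :=
    H.pushout_prod _ _ c _ _ _ _ h h.snd IsPushout.of_id_fst hS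
  have : Mono s' := mono_inr_of_isPushout_self hS
  exact H.terminal_of_diag Q (.of_comp_mono_right (m := s') (by rwa [Category.id_comp]))

theorem nonempty_isTerminal_of_isPushout {X A B Q : C} {p : X ⟶ A} {q : X ⟶ B}
    (h : IsBinaryProduct p q) {a : B ⟶ Q} {c : A ⟶ Q} (hQ : IsPushout q p a c) :
    Nonempty (IsTerminal Q) := by
  obtain ⟨P, b', b, hP, -⟩ := H.pushout_exists p p h.fst
  have hprod : IsBinaryProduct b c := H.pushout_prod _ _ p _ _ _ _ h h.fst hP hQ
  have : Mono b := mono_inr_of_isPushout_self hP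
  exact H.nonempty_isTerminal_of_isBinaryProduct_id
    (.of_comp_mono_left (m := b) (by rwa [Category.id_comp]))

theorem epi_of_isProductProjection {X A : C} {p : X ⟶ A} (hp : IsProductProjection p) :
    Epi p := by
  obtain ⟨B, q, h⟩ := hp
  obtain ⟨P, b', b, hP, -⟩ := H.pushout_exists p p h.fst
  obtain ⟨Q, a, c, hQ, -⟩ := H.pushout_exists q p h.snd
  obtain ⟨hterm⟩ := H.nonempty_isTerminal_of_isPushout h hQ
  have hprod : IsBinaryProduct b c := H.pushout_prod _ _ p _ _ _ _ h h.fst hP hQ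
  exact (epi_iff_isIso_inr hP.isColimit).2 ((isBinaryProduct_iff_isIso_fst hterm).1 hprod)

theorem nonempty_isTerminal_of_isPushout_comp {Y A B B' R : C} {k₁ : Y ⟶ A} {k₂ : Y ⟶ B}
    {c : B ⟶ B'} (h : IsBinaryProduct k₁ k₂) {s : B' ⟶ R} {r : A ⟶ R} [Epi r]
    (hR : IsPushout (k₂ ≫ c) k₁ s r) : Nonempty (IsTerminal R) := by
  obtain ⟨Q, a, t, hQ, -⟩ := H.pushout_exists k₂ k₁ h.snd
  obtain ⟨hterm⟩ := H.nonempty_isTerminal_of_isPushout h hQ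
  have hw : k₂ ≫ c ≫ s = k₁ ≫ r := by rw [← Category.assoc, hR.w]
  let g : Q ⟶ R := hQ.desc (c ≫ s) r hw
  have : Epi g := epi_of_epi_fac (hQ.inr_desc (c ≫ s) r hw)
  have : IsSplitMono g := hterm.isSplitMono_from g
  have : IsIso g := isIso_of_epi_of_isSplitMono g
  exact ⟨hterm.ofIso (asIso g)⟩

theorem isIso_of_isBinaryProduct_comp {Y A₁ A₂ B₁ B₂ : C} {k₁ : Y ⟶ A₁} {k₂ : Y ⟶ A₂}
    {c₁ : A₁ ⟶ B₁} {c₂ : A₂ ⟶ B₂} (h : IsBinaryProduct k₁ k₂)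
    (h' : IsBinaryProduct (k₁ ≫ c₁) (k₂ ≫ c₂)) : IsIso c₁ := by
  have : Epi k₁ := H.epi_of_isProductProjection h.fst
  have hleft : IsPushout (k₁ ≫ c₁) k₁ (𝟙 B₁) c₁ := by
    simpa only [Category.id_comp] using
      ((epi_iff_isPushout k₁).1 inferInstance).paste_horiz IsPushout.of_id_snd
  obtain ⟨R, s, r, hR, -⟩ := H.pushout_exists (k₂ ≫ c₂) k₁ h'.snd
  have hprod : IsBinaryProduct c₁ r := H.pushout_prod _ _ k₁ _ _ _ _ h' h.fst hleft hR
  have : Epi r := H.epi_of_isProductProjection hprod.snd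
  obtain ⟨hterm⟩ := H.nonempty_isTerminal_of_isPushout_comp h hR
  exact (isBinaryProduct_iff_isIso_fst hterm).1 hprod

theorem isPushout_of_isBinaryProduct {X A₁ A₂ Y B₁ B₂ : C} {π₁ : X ⟶ A₁} {π₂ : X ⟶ A₂}
    {f : X ⟶ Y} {p₁ : A₁ ⟶ B₁} {p₂ : A₂ ⟶ B₂} {π₁' : Y ⟶ B₁} {π₂' : Y ⟶ B₂}
    (hπ : IsBinaryProduct π₁ π₂) (hf : IsProductProjection f) (hπ' : IsBinaryProduct π₁' π₂')
    (w₁ : π₁ ≫ p₁ = f ≫ π₁') (w₂ : π₂ ≫ p₂ = f ≫ π₂') : IsPushout π₁ f p₁ π₁' := by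
  obtain ⟨P₁, a₁, k₁, h₁, -⟩ := H.pushout_exists π₁ f hπ.fst
  obtain ⟨P₂, a₂, k₂, h₂, -⟩ := H.pushout_exists π₂ f hπ.snd
  have hk : IsBinaryProduct k₁ k₂ := H.pushout_prod _ _ f _ _ _ _ hπ hf h₁ h₂
  have : IsIso (h₁.desc p₁ π₁' w₁) :=
    H.isIso_of_isBinaryProduct_comp (c₂ := h₂.desc p₂ π₂' w₂) hk
      (by rwa [h₁.inr_desc, h₂.inr_desc])
  exact h₁.of_iso (.refl _) (.refl _) (.refl _) (asIso (h₁.desc p₁ π₁' w₁))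
    (by simp) (by simp) (by simp) (by simp)

theorem projectionCoextensive (X : C) : ProjectionCoextensive X where
  pushout_exists Y A f p hf hp := by
    have := isStableUnderCobaseChange_projections H.pushout_exists
    obtain ⟨P, a, q, sq, hq⟩ := H.pushout_exists p f hp
    exact ⟨P, a, q, sq, (projections C).of_isPushout sq hf, hq⟩
  isBinaryProduct_iff _ _ _ _ _ π₁ π₂ f p₁ p₂ π₁' π₂' hπ hf hp₁ hp₂ w₁ w₂ :=
    ⟨fun hπ' ↦
      ⟨⟨H.isPushout_of_isBinaryProduct hπ hf hπ' w₁ w₂, hp₁, hπ'.fst⟩,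
        ⟨H.isPushout_of_isBinaryProduct hπ.symm hf hπ'.symm w₂ w₁, hp₂, hπ'.snd⟩⟩,
      fun ⟨h₁, h₂⟩ ↦ H.pushout_prod _ _ f _ _ _ _ hπ hf h₁.1 h₂.1⟩

end CoBoolean

namespace ProjectionCoextensive

variable {X : C} (hX : ProjectionCoextensive X)

include hX

theorem isBinaryProduct_of_isPushout [(projections C).IsStableUnderCobaseChange]
    {A₁ A₂ Y B₁ B₂ : C} {π₁ : X ⟶ A₁} {π₂ : X ⟶ A₂} {f : X ⟶ Y} {p₁ : A₁ ⟶ B₁} {p₂ : A₂ ⟶ B₂}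
    {π₁' : Y ⟶ B₁} {π₂' : Y ⟶ B₂} (hπ : IsBinaryProduct π₁ π₂) (hf : IsProductProjection f)
    (h₁ : IsPushout π₁ f p₁ π₁') (h₂ : IsPushout π₂ f p₂ π₂') : IsBinaryProduct π₁' π₂' := by
  have hp₁ : projections C p₁ := (projections C).of_isPushout h₁ hf
  have hp₂ : projections C p₂ := (projections C).of_isPushout h₂ hf
  have hπ₁' : projections C π₁' := (projections C).of_isPushout h₁.flip hπ.fst
  have hπ₂' : projections C π₂' := (projections C).of_isPushout h₂.flip hπ.snd
  exact (hX.isBinaryProduct_iff _ _ f _ _ _ _ hπ hf hp₁ hp₂ h₁.w h₂.w).2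
    ⟨⟨h₁, hp₁, hπ₁'⟩, ⟨h₂, hp₂, hπ₂'⟩⟩

theorem nonempty_isTerminal_of_isBinaryProduct_id_id [HasTerminal C]
    (h : IsBinaryProduct (𝟙 X) (𝟙 X)) : Nonempty (IsTerminal X) := by
  have hunit : IsBinaryProduct (𝟙 X) (terminal.from X) :=
    (isBinaryProduct_iff_isIso_fst terminalIsTerminal).2 inferInstance
  have hpushout : IsPushout (𝟙 X) (𝟙 X) (terminal.from X) (terminal.from X) :=
    ((hX.isBinaryProduct_iff _ _ (𝟙 X) (𝟙 X) _ _ _ h hunit.fst hunit.fst hunit.snd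
      rfl rfl).1 hunit).2.1
  have : IsIso (terminal.from X) := hpushout.isIso_inl_of_isIso
  exact ⟨terminalIsTerminal.ofIso (asIso (terminal.from X)).symm⟩

end ProjectionCoextensive

/-- If product projections are stable under pushout, then `C` is co-Boolean if and
only if every object of `C` is projection-coextensive. -/
theorem coBoolean_iff_forall_projectionCoextensive
    {C : Type u} [Category.{v} C] [HasFiniteProducts C]
    (hstable : ∀ ⦃X A Y : C⦄ (p : X ⟶ A) (f : X ⟶ Y), IsProductProjection p →
      ∃ (P : C) (a : A ⟶ P) (q : Y ⟶ P), IsPushout p f a q ∧ IsProductProjection q) :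
    CoBoolean C ↔ ∀ X : C, ProjectionCoextensive X := by
  have := isStableUnderCobaseChange_projections hstable
  exact
    ⟨CoBoolean.projectionCoextensive,
      fun h ↦
        { pushout_exists := hstable
          pushout_prod := fun X _ _ _ _ _ _ _ _ _ _ _ _ ↦ (h X).isBinaryProduct_of_isPushout
          terminal_of_diag := fun X ↦ (h X).nonempty_isTerminal_of_isBinaryProduct_id_id }⟩
end
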